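/- arXiv:0812.0217 — 2 statements merged into one kernel-verified Lean document; each statement's English description precedes it below -/
import Mathlib

section
/- Let a ∈ ℝ. On U = {(u,φ,p_u,p_φ) ∈ ℝ⁴ : 0 < u < 1}, let Π′ be the antisymmetric 4×4 matrix of ℂ-valued smooth functions with upper-triangular entries (coordinates ordered z = (u,φ,p_u,p_φ)): Π′₁₂ = u^{1/3}, Π′₁₃ = i·u^{1/3}·p_u − u^{4/3}·p_φ/(1−u²), Π′₁₄ = 0, Π′₂₃ = (1−4u²)·p_u/(3u^{2/3}(1−u²)) + i·u^{1/3}(4−u²)·p_φ/(3(1−u²)²), Π′₂₄ = 0, Π′₃₄ = i·a·e^{iφ}/(2u^{1/3}√(1−u²)), where i = √−1. Then Π′ satisfies the Jacobi condition: for all i,j,k ∈ {1,…,4}, Σ_{l=1}^{4}(Π′_{li}∂_lΠ′_{jk} + Π′_{lj}∂_lΠ′_{ki} + Π′_{lk}∂_lΠ′_{ij}) = 0 on U. -/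
open Complex

/-- Partial derivative of a ℂ-valued function on ℝ⁴ in the `i`-th coordinate. -/
noncomputable def pdC (i : Fin 4) (f : (Fin 4 → ℝ) → ℂ) (z : Fin 4 → ℝ) : ℂ :=
  fderiv ℝ f z (Pi.single i 1)

/-- The second (complex) Poisson matrix Π′ of the Goryachev system on T*S²,
in coordinates z = (u, φ, p_u, p_φ); it is P′_{μν} at μ = 0, ν = −a². -/
noncomputable def GorP (a : ℝ) (z : Fin 4 → ℝ) : Matrix (Fin 4) (Fin 4) ℂ :=
  let e12 : ℂ := ((z 0 ^ ((1 : ℝ) / 3) : ℝ) : ℂ)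
  let e13 : ℂ := Complex.I * ((z 0 ^ ((1 : ℝ) / 3) * z 2 : ℝ) : ℂ)
    - ((z 0 ^ ((4 : ℝ) / 3) * z 3 / (1 - (z 0) ^ 2) : ℝ) : ℂ)
  let e23 : ℂ := (((1 - 4 * (z 0) ^ 2) * z 2 / (3 * z 0 ^ ((2 : ℝ) / 3) * (1 - (z 0) ^ 2)) : ℝ) : ℂ)
    + Complex.I * ((z 0 ^ ((1 : ℝ) / 3) * (4 - (z 0) ^ 2) * z 3 / (3 * (1 - (z 0) ^ 2) ^ 2) : ℝ) : ℂ)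
  let e34 : ℂ := Complex.I * (a : ℂ) * Complex.exp (Complex.I * ((z 1 : ℝ) : ℂ))
    / ((2 * z 0 ^ ((1 : ℝ) / 3) * Real.sqrt (1 - (z 0) ^ 2) : ℝ) : ℂ)
  !![0, e12, e13, 0;
     -e12, 0, e23, 0;
     -e13, -e23, 0, e34;
     0, 0, -e34, 0]

/-- The Jacobiator of a matrix-valued function `P`, evaluated at `z`. -/
noncomputable def jacobiator (P : (Fin 4 → ℝ) → Matrix (Fin 4) (Fin 4) ℂ) (z : Fin 4 → ℝ)
    (i j k : Fin 4) : ℂ :=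
  ∑ l : Fin 4,
    (P z l i * pdC l (fun w => P w j k) z
      + P z l j * pdC l (fun w => P w k i) z
      + P z l k * pdC l (fun w => P w i j) z)

theorem pdC_neg (i : Fin 4) (f : (Fin 4 → ℝ) → ℂ) (z : Fin 4 → ℝ) :
    pdC i (fun w => -f w) z = -pdC i f z := by
  simp [pdC, fderiv_fun_neg]

theorem pdC_const (i : Fin 4) (c : ℂ) (z : Fin 4 → ℝ) : pdC i (fun _ => c) z = 0 := by
  simp [pdC]

/-- A partial derivative is the derivative along the corresponding coordinate line. -/
theorem pdC_eq_of_hasDerivAt {i : Fin 4} {f : (Fin 4 → ℝ) → ℂ} {z : Fin 4 → ℝ} {f' : ℂ}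
    (hf : DifferentiableAt ℝ f z)
    (h : HasDerivAt (fun t => f (Function.update z i t)) f' (z i)) : pdC i f z = f' := by
  have hz : Function.update z i (z i) = z := Function.update_eq_self i z
  have hcomp := HasFDerivAt.comp_hasDerivAt (z i) (hz.symm ▸ hf.hasFDerivAt)
    (hasDerivAt_update z i (z i))
  have heq := hcomp.unique h
  rwa [hz] at heq

theorem pdC_eq_zero_of_update {i : Fin 4} {f : (Fin 4 → ℝ) → ℂ} {z : Fin 4 → ℝ}
    (hf : DifferentiableAt ℝ f z) (h : ∀ t, f (Function.update z i t) = f z) :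
    pdC i f z = 0 :=
  pdC_eq_of_hasDerivAt hf (by simpa only [h] using hasDerivAt_const (z i) (f z))

section Antisymmetric

variable {P : (Fin 4 → ℝ) → Matrix (Fin 4) (Fin 4) ℂ}

theorem jacobiator_rotate (z : Fin 4 → ℝ) (i j k : Fin 4) :
    jacobiator P z j k i = jacobiator P z i j k :=
  Finset.sum_congr rfl fun _ _ => by ring

theorem jacobiator_swap (hP : ∀ w i j, P w i j = -P w j i) (z : Fin 4 → ℝ) (i j k : Fin 4) :
    jacobiator P z j i k = -jacobiator P z i j k := by
  have hd : ∀ l i j, pdC l (fun w => P w i j) z = -pdC l (fun w => P w j i) z := fun l i j => by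
    rw [← pdC_neg]
    simp only [← hP]
  simp only [jacobiator, ← Finset.sum_neg_distrib]
  refine Finset.sum_congr rfl fun l _ => ?_
  rw [hd l i k, hd l k j, hd l j i]
  ring

/-- For an antisymmetric matrix the Jacobi condition need only be checked on the increasing
triples of indices. -/
theorem jacobiator_eq_zero_of_increasing (hP : ∀ w i j, P w i j = -P w j i) {z : Fin 4 → ℝ}
    (h : ∀ i j k, i < j → j < k → jacobiator P z i j k = 0) (i j k : Fin 4) :
    jacobiator P z i j k = 0 := by
  have hs := jacobiator_swap hP z
  have hr := jacobiator_rotate (P := P) z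
  have hd : ∀ i k, jacobiator P z i i k = 0 := fun i k => self_eq_neg.mp (hs i i k)
  rcases lt_trichotomy i j with hij | hij | hij <;>
  rcases lt_trichotomy j k with hjk | hjk | hjk <;>
  rcases lt_trichotomy i k with hik | hik | hik <;>
  grind

end Antisymmetric

theorem GorP_antisymm (a : ℝ) (w : Fin 4 → ℝ) (i j : Fin 4) :
    GorP a w i j = -GorP a w j i := by
  fin_cases i <;> fin_cases j <;> simp [GorP]

section Derivatives

variable {u : ℝ}

theorem rpow_two_thirds_eq (h0 : 0 < u) : u ^ ((2 : ℝ) / 3) = u / u ^ ((1 : ℝ) / 3) := by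
  rw [← Real.rpow_one_sub' h0.le (by norm_num)]
  norm_num

theorem rpow_four_thirds_eq (h0 : 0 < u) : u ^ ((4 : ℝ) / 3) = u * u ^ ((1 : ℝ) / 3) := by
  rw [← Real.rpow_one_add' h0.le (by norm_num)]
  norm_num

theorem hasDerivAt_rpow_one_third (h0 : 0 < u) :
    HasDerivAt (fun t : ℝ => t ^ ((1 : ℝ) / 3)) (u ^ ((1 : ℝ) / 3) / (3 * u)) u := by
  convert Real.hasDerivAt_rpow_const (p := (1 : ℝ) / 3) (Or.inl h0.ne') using 1
  rw [Real.rpow_sub_one h0.ne']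
  field_simp

theorem hasDerivAt_rpow_four_thirds (h0 : 0 < u) :
    HasDerivAt (fun t : ℝ => t ^ ((4 : ℝ) / 3)) (4 / 3 * u ^ ((1 : ℝ) / 3)) u := by
  convert Real.hasDerivAt_rpow_const (p := (4 : ℝ) / 3) (Or.inl h0.ne') using 3
  norm_num

theorem hasDerivAt_one_sub_sq (u : ℝ) : HasDerivAt (fun t : ℝ => 1 - t ^ 2) (-(2 * u)) u := by
  simpa using (hasDerivAt_pow 2 u).const_sub 1

theorem one_sub_sq_pos (h0 : 0 < u) (h1 : u < 1) : 0 < 1 - u ^ 2 := by nlinarith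

theorem hasDerivAt_rpow_one_third_mul_sqrt (h0 : 0 < u) (h1 : u < 1) :
    HasDerivAt (fun t : ℝ => 2 * t ^ ((1 : ℝ) / 3) * √(1 - t ^ 2))
      (2 * u ^ ((1 : ℝ) / 3) * √(1 - u ^ 2) * ((1 - 4 * u ^ 2) / (3 * u * (1 - u ^ 2)))) u := by
  have hv := one_sub_sq_pos h0 h1
  have hs := Real.sqrt_pos.mpr hv
  have hsq := Real.sq_sqrt hv.le
  refine (((hasDerivAt_rpow_one_third h0).const_mul 2).fun_mul
    ((hasDerivAt_one_sub_sq u).sqrt hv.ne')).congr_deriv ?_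
  field_simp
  rw [hsq]
  ring

end Derivatives

section Entries

variable {z : Fin 4 → ℝ}

theorem differentiableAt_GorP (a : ℝ) (h0 : 0 < z 0) (h1 : z 0 < 1) (i j : Fin 4) :
    DifferentiableAt ℝ (fun w => GorP a w i j) z := by
  have hu : z 0 ≠ 0 := h0.ne'
  have hv : 1 - z 0 ^ 2 ≠ 0 := (one_sub_sq_pos h0 h1).ne'
  have hs : √(1 - z 0 ^ 2) ≠ 0 := (Real.sqrt_pos.mpr (one_sub_sq_pos h0 h1)).ne'
  have hr : ∀ r : ℝ, z 0 ^ r ≠ 0 := fun r => (Real.rpow_pos_of_pos h0 r).ne'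
  have ho : ∀ {f : (Fin 4 → ℝ) → ℝ}, DifferentiableAt ℝ f z →
      DifferentiableAt ℝ (fun w => (f w : ℂ)) z := fun hf =>
    Complex.ofRealCLM.differentiableAt.comp z hf
  have e12 : DifferentiableAt ℝ (fun w => GorP a w 0 1) z := by
    refine ho ?_
    fun_prop (disch := simp [hu])
  have e13 : DifferentiableAt ℝ (fun w => GorP a w 0 2) z := by
    refine ((ho ?_).const_mul _).sub (ho ?_)
    · fun_prop (disch := simp [hu, hv])
    · fun_prop (disch := simp [hu, hv])
  have e23 : DifferentiableAt ℝ (fun w => GorP a w 1 2) z := by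
    refine (ho ?_).add ((ho ?_).const_mul _)
    · fun_prop (disch := simp [hr, hv])
    · fun_prop (disch := simp [hv])
  have e34 : DifferentiableAt ℝ (fun w => GorP a w 2 3) z := by
    have hden : DifferentiableAt ℝ
        (fun w : Fin 4 → ℝ => 2 * w 0 ^ ((1 : ℝ) / 3) * √(1 - w 0 ^ 2)) z := by
      fun_prop (disch := simp [hu, hv])
    have hnum : DifferentiableAt ℝ
        (fun w : Fin 4 → ℝ => I * (a : ℂ) * exp (I * ((w 1 : ℝ) : ℂ))) z :=
      (((ho (differentiableAt_apply 1 z)).const_mul I).cexp).const_mul _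
    have hinv := hnum.fun_mul
      (ho (hden.fun_inv (mul_ne_zero (mul_ne_zero two_ne_zero (hr _)) hs)))
    simp only [ofReal_inv, ← div_eq_mul_inv] at hinv
    exact hinv
  have h03 : DifferentiableAt ℝ (fun w => GorP a w 0 3) z := differentiableAt_const 0
  have h13 : DifferentiableAt ℝ (fun w => GorP a w 1 3) z := differentiableAt_const 0
  have hdiag : DifferentiableAt ℝ (fun w => GorP a w i i) z := by
    simp only [fun w => self_eq_neg.mp (GorP_antisymm a w i i), differentiableAt_const]
  have key : ∀ i j : Fin 4, i < j → DifferentiableAt ℝ (fun w => GorP a w i j) z := by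
    intro i j hij
    fin_cases i <;> fin_cases j <;> first | assumption | exact absurd hij (by decide)
  rcases lt_trichotomy i j with hij | rfl | hij
  · exact key i j hij
  · exact hdiag
  · simpa only [GorP_antisymm a _ i j] using (key j i hij).fun_neg

theorem pdC_zero_GorP_zero_one (a : ℝ) (h0 : 0 < z 0) (h1 : z 0 < 1) :
    pdC 0 (fun w => GorP a w 0 1) z = ((z 0 ^ ((1 : ℝ) / 3) / (3 * z 0) : ℝ) : ℂ) :=
  pdC_eq_of_hasDerivAt (differentiableAt_GorP a h0 h1 0 1) <| by
    simpa [GorP] using (hasDerivAt_rpow_one_third h0).ofReal_comp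

theorem pdC_zero_GorP_zero_two (a : ℝ) (h0 : 0 < z 0) (h1 : z 0 < 1) :
    pdC 0 (fun w => GorP a w 0 2) z =
      I * ((z 0 ^ ((1 : ℝ) / 3) / (3 * z 0) * z 2 : ℝ) : ℂ)
        - (((4 / 3 * z 0 ^ ((1 : ℝ) / 3) * z 3 * (1 - z 0 ^ 2)
          - z 0 ^ ((4 : ℝ) / 3) * z 3 * (-(2 * z 0))) / (1 - z 0 ^ 2) ^ 2 : ℝ) : ℂ) := by
  refine pdC_eq_of_hasDerivAt (differentiableAt_GorP a h0 h1 0 2) ?_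
  have hv := (one_sub_sq_pos h0 h1).ne'
  exact ((((hasDerivAt_rpow_one_third h0).mul_const (z 2)).ofReal_comp).const_mul I).sub
    ((((hasDerivAt_rpow_four_thirds h0).mul_const (z 3)).fun_div
      (hasDerivAt_one_sub_sq (z 0)) hv).ofReal_comp)

theorem pdC_two_GorP_zero_two (a : ℝ) (h0 : 0 < z 0) (h1 : z 0 < 1) :
    pdC 2 (fun w => GorP a w 0 2) z = I * ((z 0 ^ ((1 : ℝ) / 3) : ℝ) : ℂ) := by
  refine pdC_eq_of_hasDerivAt (differentiableAt_GorP a h0 h1 0 2) ?_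
  have h := ((((hasDerivAt_id' (z 2)).const_mul (z 0 ^ ((1 : ℝ) / 3))).ofReal_comp).const_mul
    I).sub_const ((z 0 ^ ((4 : ℝ) / 3) * z 3 / (1 - z 0 ^ 2) : ℝ) : ℂ)
  rw [mul_one] at h
  exact h

theorem pdC_two_GorP_one_two (a : ℝ) (h0 : 0 < z 0) (h1 : z 0 < 1) :
    pdC 2 (fun w => GorP a w 1 2) z =
      (((1 - 4 * z 0 ^ 2) / (3 * z 0 ^ ((2 : ℝ) / 3) * (1 - z 0 ^ 2)) : ℝ) : ℂ) := by
  refine pdC_eq_of_hasDerivAt (differentiableAt_GorP a h0 h1 1 2) ?_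
  have h := ((((hasDerivAt_id' (z 2)).const_mul (1 - 4 * z 0 ^ 2)).div_const
    (3 * z 0 ^ ((2 : ℝ) / 3) * (1 - z 0 ^ 2))).ofReal_comp).add_const
    (I * ((z 0 ^ ((1 : ℝ) / 3) * (4 - z 0 ^ 2) * z 3 / (3 * (1 - z 0 ^ 2) ^ 2) : ℝ) : ℂ))
  rw [mul_one] at h
  exact h

theorem pdC_zero_GorP_two_three (a : ℝ) (h0 : 0 < z 0) (h1 : z 0 < 1) :
    pdC 0 (fun w => GorP a w 2 3) z =
      -GorP a z 2 3 * (((1 - 4 * z 0 ^ 2) / (3 * z 0 * (1 - z 0 ^ 2)) : ℝ) : ℂ) := by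
  refine pdC_eq_of_hasDerivAt (differentiableAt_GorP a h0 h1 2 3) ?_
  have hden : ((2 * z 0 ^ ((1 : ℝ) / 3) * √(1 - z 0 ^ 2) : ℝ) : ℂ) ≠ 0 := by
    have := Real.rpow_pos_of_pos h0 ((1 : ℝ) / 3)
    have := Real.sqrt_pos.mpr (one_sub_sq_pos h0 h1)
    exact_mod_cast (by positivity : 2 * z 0 ^ ((1 : ℝ) / 3) * √(1 - z 0 ^ 2) ≠ 0)
  have h := (hasDerivAt_const (z 0) (I * (a : ℂ) * exp (I * (z 1 : ℂ)))).fun_div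
    (hasDerivAt_rpow_one_third_mul_sqrt h0 h1).ofReal_comp hden
  refine h.congr_deriv ?_
  have hD : GorP a z 2 3 = I * (a : ℂ) * exp (I * (z 1 : ℂ))
    / ((2 * z 0 ^ ((1 : ℝ) / 3) * √(1 - z 0 ^ 2) : ℝ) : ℂ) := rfl
  rw [hD, ofReal_mul (2 * z 0 ^ ((1 : ℝ) / 3) * √(1 - z 0 ^ 2))]
  generalize ((2 * z 0 ^ ((1 : ℝ) / 3) * √(1 - z 0 ^ 2) : ℝ) : ℂ) = d at hden
  generalize (((1 - 4 * z 0 ^ 2) / (3 * z 0 * (1 - z 0 ^ 2)) : ℝ) : ℂ) = q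
  field_simp
  ring

theorem pdC_one_GorP_two_three (a : ℝ) (h0 : 0 < z 0) (h1 : z 0 < 1) :
    pdC 1 (fun w => GorP a w 2 3) z = I * GorP a z 2 3 := by
  refine pdC_eq_of_hasDerivAt (differentiableAt_GorP a h0 h1 2 3) ?_
  have h := ((((hasDerivAt_id' (z 1)).ofReal_comp.const_mul I).cexp).const_mul
    (I * (a : ℂ))).div_const ((2 * z 0 ^ ((1 : ℝ) / 3) * √(1 - z 0 ^ 2) : ℝ) : ℂ)
  refine h.congr_deriv ?_
  have hD : GorP a z 2 3 = I * (a : ℂ) * exp (I * (z 1 : ℂ))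
    / ((2 * z 0 ^ ((1 : ℝ) / 3) * √(1 - z 0 ^ 2) : ℝ) : ℂ) := rfl
  rw [hD, ofReal_one]
  ring

end Entries

/-- The complex matrix Π′ of the Goryachev system satisfies the Jacobi
condition on 0 < u < 1. -/
theorem GorP_jacobi (a : ℝ) (z : Fin 4 → ℝ) (h0 : 0 < z 0) (h1 : z 0 < 1) :
    ∀ i j k : Fin 4,
      ∑ l : Fin 4,
        (GorP a z l i * pdC l (fun w => GorP a w j k) z
          + GorP a z l j * pdC l (fun w => GorP a w k i) z
          + GorP a z l k * pdC l (fun w => GorP a w i j) z) = 0 := by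
  intro i j k
  refine jacobiator_eq_zero_of_increasing (GorP_antisymm a) ?_ i j k
  have hdiff := differentiableAt_GorP a h0 h1
  have hA : ∀ l : Fin 4, l ≠ 0 → pdC l (fun w => GorP a w 0 1) z = 0 := fun l hl =>
    pdC_eq_zero_of_update (hdiff 0 1) fun t => by simp [GorP, hl.symm]
  have hC : pdC 1 (fun w => GorP a w 1 2) z = 0 :=
    pdC_eq_zero_of_update (hdiff 1 2) fun t => by simp [GorP]
  have hD : pdC 2 (fun w => GorP a w 2 3) z = 0 :=
    pdC_eq_zero_of_update (hdiff 2 3) fun t => by simp [GorP]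
  have hneg : ∀ l i j, pdC l (fun w => GorP a w i j) z = -pdC l (fun w => GorP a w j i) z :=
    fun l i j => by
      rw [← pdC_neg]
      simp only [← GorP_antisymm]
  have z03 : ∀ w, GorP a w 0 3 = 0 := fun _ => rfl
  have z13 : ∀ w, GorP a w 1 3 = 0 := fun _ => rfl
  have zdiag : ∀ i, GorP a z i i = 0 := fun i => self_eq_neg.mp (GorP_antisymm a z i i)
  have s10 := GorP_antisymm a z 1 0
  have s20 := GorP_antisymm a z 2 0
  have s21 := GorP_antisymm a z 2 1
  have s30 := GorP_antisymm a z 3 0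
  have s31 := GorP_antisymm a z 3 1
  have s32 := GorP_antisymm a z 3 2
  have hu := h0.ne'
  have hv := (one_sub_sq_pos h0 h1).ne'
  have hc := (Real.rpow_pos_of_pos h0 ((1 : ℝ) / 3)).ne'
  have eB : GorP a z 0 2 = I * ((z 0 ^ ((1 : ℝ) / 3) * z 2 : ℝ) : ℂ)
      - ((z 0 ^ ((4 : ℝ) / 3) * z 3 / (1 - z 0 ^ 2) : ℝ) : ℂ) := rfl
  have eC : GorP a z 1 2 =
      (((1 - 4 * z 0 ^ 2) * z 2 / (3 * z 0 ^ ((2 : ℝ) / 3) * (1 - z 0 ^ 2)) : ℝ) : ℂ)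
        + I * ((z 0 ^ ((1 : ℝ) / 3) * (4 - z 0 ^ 2) * z 3 / (3 * (1 - z 0 ^ 2) ^ 2) : ℝ) : ℂ) :=
    rfl
  have eA : GorP a z 0 1 = ((z 0 ^ ((1 : ℝ) / 3) : ℝ) : ℂ) := rfl
  have j012 : jacobiator (GorP a) z 0 1 2 = 0 := by
    simp only [jacobiator, Fin.sum_univ_four, zdiag, s10, s20, s21, s30, s31, s32, z03, z13,
      hneg _ 2 0, hC, hA 1 (by decide), hA 2 (by decide), hA 3 (by decide),
      pdC_zero_GorP_zero_one a h0 h1, pdC_zero_GorP_zero_two a h0 h1,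
      pdC_two_GorP_zero_two a h0 h1, pdC_two_GorP_one_two a h0 h1]
    have hvC : (1 - (z 0 : ℂ) ^ 2) ≠ 0 := by exact_mod_cast hv
    have huC : (z 0 : ℂ) ≠ 0 := by exact_mod_cast hu
    have hcC : ((z 0 ^ ((1 : ℝ) / 3) : ℝ) : ℂ) ≠ 0 := by exact_mod_cast hc
    rw [eA, eB, eC, rpow_two_thirds_eq h0, rpow_four_thirds_eq h0]
    generalize z 0 ^ ((1 : ℝ) / 3) = c at hcC
    push_cast
    field_simp
    ring_nf
    simp only [I_sq]
    ring
  have j013 : jacobiator (GorP a) z 0 1 3 = 0 := by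
    simp only [jacobiator, Fin.sum_univ_four, zdiag, s10, s20, s21, s30, s31, z03, z13,
      hneg _ 3 0, pdC_const, hA 2 (by decide)]
    ring
  have j023 : jacobiator (GorP a) z 0 2 3 = 0 := by
    simp only [jacobiator, Fin.sum_univ_four, zdiag, s10, s20, s30, s32, z03, z13,
      hneg _ 3 0, pdC_const, pdC_one_GorP_two_three a h0 h1, pdC_two_GorP_zero_two a h0 h1, hD]
    rw [eA]
    ring
  have j123 : jacobiator (GorP a) z 1 2 3 = 0 := by
    simp only [jacobiator, Fin.sum_univ_four, zdiag, s21, s31, s32, z03, z13,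
      hneg _ 3 1, pdC_const, pdC_zero_GorP_two_three a h0 h1, pdC_two_GorP_one_two a h0 h1, hD]
    have key : z 0 ^ ((1 : ℝ) / 3) * ((1 - 4 * z 0 ^ 2) / (3 * z 0 * (1 - z 0 ^ 2)))
        = (1 - 4 * z 0 ^ 2) / (3 * z 0 ^ ((2 : ℝ) / 3) * (1 - z 0 ^ 2)) := by
      rw [rpow_two_thirds_eq h0]
      field_simp
    rw [eA, ← key, ofReal_mul]
    ring
  intro i j k hij hjk
  fin_cases i <;> fin_cases j <;> fin_cases k <;>
    first
    | assumption
    | exact absurd hij (by decide)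
    | exact absurd hjk (by decide)
end

section
/- Let a ∈ ℝ, a ≠ 0, c ∈ ℝ and α ∈ ℝ, α ≠ 0. Define on a suitable open subset of ℂ⁴ with coordinates (q₁,q₂,p₁,p₂) (on which q₁ ≠ q₂, q₁q₂ ≠ 0, and fixed holomorphic branches of all the powers, square roots and logarithms below exist) the functions: u = (−2iα(q₁p₁ − q₂p₂)/(q₁ − q₂))^{1/(2α)} − c, p_φ = −i·q₁q₂(p₁ − p₂)/(q₁ − q₂), φ = −(i/2)·(2(3α−1)·ln(u+c) + ln(4q₁²q₂²(u²−1)/a²)), p_u = (3iα/(u+c) + i(uc+1)/((u+c)(u²−1)))·p_φ − i·(q₁+q₂)·(u+c)^{2α−1}. Then this transformation is canonical: with respect to the canonical Poisson bracket in (q₁,q₂,p₁,p₂) one has {u, p_u} = 1, {φ, p_φ} = 1, and {u, φ} = {u, p_φ} = {φ, p_u} = {p_u, p_φ} = 0. -/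
open Complex

/-- Partial derivative of a holomorphic function on ℂ⁴ in the `k`-th
coordinate direction, coordinates z = (q₁, q₂, p₁, p₂). -/
noncomputable def pdq (k : Fin 4) (f : (Fin 4 → ℂ) → ℂ) (z : Fin 4 → ℂ) : ℂ :=
  fderiv ℂ f z (Pi.single k 1)

/-- The canonical Poisson bracket on ℂ⁴ with coordinates (q₁, q₂, p₁, p₂):
{f,g} = Σ_{k=1,2} (∂f/∂q_k ∂g/∂p_k − ∂f/∂p_k ∂g/∂q_k). -/
noncomputable def canBrC4 (f g : (Fin 4 → ℂ) → ℂ) (z : Fin 4 → ℂ) : ℂ :=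
  pdq 0 f z * pdq 2 g z + pdq 1 f z * pdq 3 g z
    - pdq 2 f z * pdq 0 g z - pdq 3 f z * pdq 1 g z

/-- The sum `q₁ + q₂`. -/
def qSum (z : Fin 4 → ℂ) : ℂ := z 0 + z 1

/-- The product `q₁ q₂`. -/
def qProd (z : Fin 4 → ℂ) : ℂ := z 0 * z 1

/-- The separation constant `M` in `p_k = M - N / q_k`. -/
noncomputable def sepM (z : Fin 4 → ℂ) : ℂ := (z 0 * z 2 - z 1 * z 3) / (z 0 - z 1)

/-- The separation constant `N` in `p_k = M - N / q_k`. -/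
noncomputable def sepN (z : Fin 4 → ℂ) : ℂ := z 0 * z 1 * (z 2 - z 3) / (z 0 - z 1)

section PartialDerivatives

variable {f g : (Fin 4 → ℂ) → ℂ} {z : Fin 4 → ℂ}

lemma HasFDerivAt.pdq_eq {f' : (Fin 4 → ℂ) →L[ℂ] ℂ}
    (h : HasFDerivAt f f' z) (k : Fin 4) : pdq k f z = f' (Pi.single k 1) := by
  rw [pdq, h.fderiv]

lemma pdq_add (hf : DifferentiableAt ℂ f z) (hg : DifferentiableAt ℂ g z) (k : Fin 4) :
    pdq k (fun y => f y + g y) z = pdq k f z + pdq k g z := by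
  rw [(hf.hasFDerivAt.fun_add hg.hasFDerivAt).pdq_eq]
  simp [pdq]

lemma pdq_sub (hf : DifferentiableAt ℂ f z) (hg : DifferentiableAt ℂ g z) (k : Fin 4) :
    pdq k (fun y => f y - g y) z = pdq k f z - pdq k g z := by
  rw [(hf.hasFDerivAt.fun_sub hg.hasFDerivAt).pdq_eq]
  simp [pdq]

lemma pdq_mul (hf : DifferentiableAt ℂ f z) (hg : DifferentiableAt ℂ g z) (k : Fin 4) :
    pdq k (fun y => f y * g y) z = f z * pdq k g z + g z * pdq k f z := by
  rw [(hf.hasFDerivAt.fun_mul hg.hasFDerivAt).pdq_eq]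
  simp [pdq]

lemma pdq_const_mul (hf : DifferentiableAt ℂ f z) (c : ℂ) (k : Fin 4) :
    pdq k (fun y => c * f y) z = c * pdq k f z := by
  rw [(hf.hasFDerivAt.const_mul c).pdq_eq]
  simp [pdq]

lemma pdq_comp {h : ℂ → ℂ} {h' : ℂ} (hh : HasDerivAt h h' (f z)) (hf : DifferentiableAt ℂ f z)
    (k : Fin 4) : pdq k (fun y => h (f y)) z = h' * pdq k f z := by
  have := hh.comp_hasFDerivAt z hf.hasFDerivAt
  rw [HasFDerivAt.pdq_eq (f := fun y => h (f y)) this]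
  simp [pdq]

lemma pdq_div (hf : DifferentiableAt ℂ f z) (hg : DifferentiableAt ℂ g z) (h0 : g z ≠ 0)
    (k : Fin 4) :
    pdq k (fun y => f y / g y) z = (pdq k f z * g z - f z * pdq k g z) / g z ^ 2 := by
  simp only [div_eq_mul_inv]
  rw [pdq_mul hf (hg.fun_inv h0), pdq_comp (hasDerivAt_inv h0) hg]
  field_simp
  ring

lemma pdq_cexp (hf : DifferentiableAt ℂ f z) (k : Fin 4) :
    pdq k (fun y => exp (f y)) z = exp (f z) * pdq k f z :=
  pdq_comp (hasDerivAt_exp _) hf k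

lemma pdq_congr {U : Set (Fin 4 → ℂ)} (hU : IsOpen U) (h : ∀ y ∈ U, f y = g y) (hz : z ∈ U)
    (k : Fin 4) : pdq k f z = pdq k g z := by
  have : f =ᶠ[nhds z] g := Filter.eventuallyEq_of_mem (hU.mem_nhds hz) h
  rw [pdq, pdq, this.fderiv_eq]

lemma pdq_coord (k j : Fin 4) (z : Fin 4 → ℂ) :
    pdq k (fun y => y j) z = if j = k then 1 else 0 := by
  rw [(hasFDerivAt_apply (𝕜 := ℂ) j z).pdq_eq]
  simp [Pi.single_apply]

lemma differentiableAt_qSum : DifferentiableAt ℂ qSum z := by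
  unfold qSum; fun_prop

lemma differentiableAt_qProd : DifferentiableAt ℂ qProd z := by
  unfold qProd; fun_prop

lemma differentiableAt_sepM (hz : z 0 - z 1 ≠ 0) : DifferentiableAt ℂ sepM z := by
  unfold sepM; fun_prop (disch := assumption)

lemma differentiableAt_sepN (hz : z 0 - z 1 ≠ 0) : DifferentiableAt ℂ sepN z := by
  unfold sepN; fun_prop (disch := assumption)

lemma pdq_qSum (k : Fin 4) : pdq k qSum z = ![1, 1, 0, 0] k := by
  unfold qSum
  rw [pdq_add (by fun_prop) (by fun_prop)]
  fin_cases k <;> simp [pdq_coord]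

lemma pdq_qProd (k : Fin 4) : pdq k qProd z = ![z 1, z 0, 0, 0] k := by
  unfold qProd
  rw [pdq_mul (by fun_prop) (by fun_prop)]
  fin_cases k <;> simp [pdq_coord]

lemma pdq_sepM (hz : z 0 - z 1 ≠ 0) (k : Fin 4) :
    pdq k sepM z = ![z 1 * (z 3 - z 2) / (z 0 - z 1) ^ 2, z 0 * (z 2 - z 3) / (z 0 - z 1) ^ 2,
      z 0 / (z 0 - z 1), -z 1 / (z 0 - z 1)] k := by
  unfold sepM
  rw [pdq_div (by fun_prop) (by fun_prop) hz, pdq_sub (by fun_prop) (by fun_prop),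
    pdq_sub (by fun_prop) (by fun_prop), pdq_mul (by fun_prop) (by fun_prop),
    pdq_mul (by fun_prop) (by fun_prop)]
  fin_cases k <;> simp [pdq_coord] <;> field_simp <;> ring

lemma pdq_sepN (hz : z 0 - z 1 ≠ 0) (k : Fin 4) :
    pdq k sepN z = ![-z 1 ^ 2 * (z 2 - z 3) / (z 0 - z 1) ^ 2,
      z 0 ^ 2 * (z 2 - z 3) / (z 0 - z 1) ^ 2,
      z 0 * z 1 / (z 0 - z 1), -(z 0 * z 1) / (z 0 - z 1)] k := by
  unfold sepN
  rw [pdq_div (by fun_prop) (by fun_prop) hz, pdq_mul (by fun_prop) (by fun_prop),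
    pdq_mul (by fun_prop) (by fun_prop),
    pdq_sub (by fun_prop) (by fun_prop), pdq_sub (by fun_prop) (by fun_prop)]
  fin_cases k <;> simp [pdq_coord] <;> field_simp <;> ring

/-- The functions `(q₁ + q₂, M)` and `(-log (q₁ q₂), N)` are two canonically conjugate pairs, so
the bracket of any two functions is determined by their differentials in these coordinates. -/
lemma canBrC4_eq_of_pdq_eq (hz : z 0 - z 1 ≠ 0) {a₁ a₂ a₃ a₄ b₁ b₂ b₃ b₄ : ℂ}
    (hf : ∀ k, pdq k f z
      = a₁ * pdq k qSum z + a₂ * pdq k qProd z + a₃ * pdq k sepM z + a₄ * pdq k sepN z)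
    (hg : ∀ k, pdq k g z
      = b₁ * pdq k qSum z + b₂ * pdq k qProd z + b₃ * pdq k sepM z + b₄ * pdq k sepN z) :
    canBrC4 f g z = a₁ * b₃ - a₃ * b₁ - qProd z * (a₂ * b₄ - a₄ * b₂) := by
  simp only [canBrC4, hf, hg, pdq_qSum, pdq_qProd, pdq_sepM hz, pdq_sepN hz, qProd]
  simp
  field_simp
  ring

end PartialDerivatives

/-- The Jacobi-type change of variables from the separated coordinates
(q₁,q₂,p₁,p₂) back to (u, φ, p_u, p_φ) is a canonical transformation.  The
branches of the powers and logarithms are encoded by holomorphic functions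
L₁, L₂ with exp L₁ = u + c (so (u+c)^s = exp(s·L₁)) and
exp L₂ = 4q₁²q₂²(u²−1)/a²; the defining relations are
(u+c)^{2α} = −2iα(q₁p₁−q₂p₂)/(q₁−q₂), p_φ = −i q₁q₂(p₁−p₂)/(q₁−q₂),
φ = −(i/2)(2(3α−1)L₁ + L₂), and
p_u = (3iα/(u+c) + i(uc+1)/((u+c)(u²−1)))p_φ − i(q₁+q₂)(u+c)^{2α−1}. -/
theorem jacobi_change_of_variables_is_canonical (a c α : ℝ) (ha : a ≠ 0) (hα : α ≠ 0)
    (U : Set (Fin 4 → ℂ)) (hU : IsOpen U)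
    (u φ pu pφ L₁ L₂ : (Fin 4 → ℂ) → ℂ)
    (hud : ∀ z ∈ U, DifferentiableAt ℂ u z)
    (hφd : ∀ z ∈ U, DifferentiableAt ℂ φ z)
    (hpud : ∀ z ∈ U, DifferentiableAt ℂ pu z)
    (hpφd : ∀ z ∈ U, DifferentiableAt ℂ pφ z)
    (hL₁d : ∀ z ∈ U, DifferentiableAt ℂ L₁ z)
    (hL₂d : ∀ z ∈ U, DifferentiableAt ℂ L₂ z)
    (hreg : ∀ z ∈ U, z 0 ≠ z 1 ∧ z 0 * z 1 ≠ 0 ∧ u z + (c : ℂ) ≠ 0 ∧ (u z) ^ 2 - 1 ≠ 0)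
    (hL₁ : ∀ z ∈ U, Complex.exp (L₁ z) = u z + (c : ℂ))
    (hu : ∀ z ∈ U, Complex.exp (2 * (α : ℂ) * L₁ z)
      = -2 * Complex.I * (α : ℂ) * (z 0 * z 2 - z 1 * z 3) / (z 0 - z 1))
    (hpφ : ∀ z ∈ U, pφ z = -Complex.I * z 0 * z 1 * (z 2 - z 3) / (z 0 - z 1))
    (hL₂ : ∀ z ∈ U, Complex.exp (L₂ z)
      = 4 * (z 0) ^ 2 * (z 1) ^ 2 * ((u z) ^ 2 - 1) / (a : ℂ) ^ 2)
    (hφ : ∀ z ∈ U, φ z = -(Complex.I / 2) * (2 * (3 * (α : ℂ) - 1) * L₁ z + L₂ z))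
    (hpu : ∀ z ∈ U, pu z
      = (3 * Complex.I * (α : ℂ) / (u z + (c : ℂ))
          + Complex.I * (u z * (c : ℂ) + 1) / ((u z + (c : ℂ)) * ((u z) ^ 2 - 1))) * pφ z
        - Complex.I * (z 0 + z 1) * Complex.exp ((2 * (α : ℂ) - 1) * L₁ z)) :
    ∀ z ∈ U,
      canBrC4 u pu z = 1 ∧ canBrC4 φ pφ z = 1 ∧
      canBrC4 u φ z = 0 ∧ canBrC4 u pφ z = 0 ∧
      canBrC4 φ pu z = 0 ∧ canBrC4 pu pφ z = 0 := by
  intro z hz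
  obtain ⟨hq, hP, hw, hs⟩ := hreg z hz
  have hd : z 0 - z 1 ≠ 0 := sub_ne_zero.2 hq
  have hα' : (α : ℂ) ≠ 0 := by exact_mod_cast hα
  have ha' : (a : ℂ) ≠ 0 := by exact_mod_cast ha
  have hP' : qProd z ≠ 0 := hP
  have hMd := differentiableAt_sepM hd
  have hNd := differentiableAt_sepN hd
  have hXd : DifferentiableAt ℂ qSum z := differentiableAt_qSum
  have hPd : DifferentiableAt ℂ qProd z := differentiableAt_qProd
  have hL₁z := hL₁d z hz
  have hL₂z := hL₂d z hz
  have huz := hud z hz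
  set w : ℂ := u z + c with hw_def
  set E : ℂ := exp (2 * (α : ℂ) * L₁ z) with hE_def
  have hE : E ≠ 0 := exp_ne_zero _
  have hG : exp ((2 * (α : ℂ) - 1) * L₁ z) = E / w := by
    rw [sub_mul, one_mul, exp_sub, hL₁ z hz]
  have dL₁ (k) : pdq k L₁ z = -I / E * pdq k sepM z := by
    have h := pdq_congr (f := fun y => exp (2 * (α : ℂ) * L₁ y))
      (g := fun y => (-2 * I * α) * sepM y) hU
      (fun y hy => by rw [hu y hy, sepM, mul_div_assoc]) hz k
    rw [pdq_cexp (by fun_prop), pdq_const_mul hL₁z, pdq_const_mul hMd, ← hE_def] at h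
    field_simp
    apply mul_left_cancel₀ (mul_ne_zero two_ne_zero hα')
    linear_combination h
  have du (k) : pdq k u z = -I * w / E * pdq k sepM z := by
    have h := pdq_congr (f := u) (g := fun y => exp (L₁ y) - c) hU
      (fun y hy => by rw [hL₁ y hy]; ring) hz k
    rw [pdq_sub (by fun_prop) (by fun_prop), pdq_cexp hL₁z, hL₁ z hz, dL₁] at h
    have h0 : pdq k (fun _ => (c : ℂ)) z = 0 := by simp [pdq]
    rw [h, h0]
    ring
  have dL₂ (k) : pdq k L₂ z
      = 2 / qProd z * pdq k qProd z + 2 * u z / (u z ^ 2 - 1) * pdq k u z := by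
    have h := pdq_congr (f := fun y => exp (L₂ y))
      (g := fun y => 4 / (a : ℂ) ^ 2 * (qProd y ^ 2 * (u y ^ 2 - 1))) hU
      (fun y hy => by rw [hL₂ y hy, qProd]; ring) hz k
    have hsq : HasDerivAt (fun x : ℂ => x ^ 2) (2 * qProd z) (qProd z) := by
      simpa using hasDerivAt_pow 2 (qProd z)
    have hsq' : HasDerivAt (fun x : ℂ => x ^ 2 - 1) (2 * u z) (u z) := by
      simpa using (hasDerivAt_pow 2 (u z)).sub_const 1
    rw [pdq_cexp hL₂z, pdq_const_mul (by fun_prop), pdq_mul (by fun_prop) (by fun_prop),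
      pdq_comp hsq hPd, pdq_comp hsq' huz, hL₂ z hz] at h
    have hv : 4 * z 0 ^ 2 * z 1 ^ 2 * (u z ^ 2 - 1) / (a : ℂ) ^ 2
        = 4 / (a : ℂ) ^ 2 * (qProd z ^ 2 * (u z ^ 2 - 1)) := by
      rw [qProd]; ring
    rw [hv] at h
    have hne : 4 / (a : ℂ) ^ 2 * (qProd z ^ 2 * (u z ^ 2 - 1)) ≠ 0 := by simp [ha', hP', hs]
    apply mul_left_cancel₀ hne
    rw [h]
    field_simp
    ring
  have dpφ (k) : pdq k pφ z = -I * pdq k sepN z := by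
    rw [← pdq_const_mul hNd]
    exact pdq_congr hU (fun y hy => by rw [hpφ y hy, sepN]; ring) hz k
  have dφ (k) : pdq k φ z = -I * ((3 * α - 1) * pdq k L₁ z + pdq k L₂ z / 2) := by
    rw [pdq_congr hU hφ hz k, pdq_const_mul (by fun_prop), pdq_add (by fun_prop) hL₂z,
      pdq_const_mul hL₁z]
    ring
  let A : ℂ → ℂ := fun x => 3 * I * α / (x + c) + I * (x * c + 1) / ((x + c) * (x ^ 2 - 1))
  have hAd : DifferentiableAt ℂ A (u z) := by
    have := mul_ne_zero hw hs
    fun_prop (disch := assumption)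
  have hAud : DifferentiableAt ℂ (fun y => A (u y)) z := hAd.comp z huz
  have hA : A (u z) = I * ((3 * α - 1) / w + u z / (u z ^ 2 - 1)) := by
    simp only [A, ← hw_def]
    field_simp
    rw [hw_def]
    ring
  have dpu (k) : pdq k pu z = A (u z) * pdq k pφ z + pφ z * (deriv A (u z) * pdq k u z)
      - I * (qSum z * (E / w * ((2 * α - 1) * pdq k L₁ z)) + E / w * pdq k qSum z) := by
    have h := pdq_congr (f := pu) (g := fun y => A (u y) * pφ y
      - I * (qSum y * exp ((2 * (α : ℂ) - 1) * L₁ y))) hU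
      (fun y hy => by rw [hpu y hy, qSum]; ring) hz k
    rw [h, pdq_sub (hAud.fun_mul (hpφd z hz)) (by fun_prop), pdq_mul hAud (hpφd z hz),
      pdq_comp hAd.hasDerivAt huz, pdq_const_mul (by fun_prop), pdq_mul hXd (by fun_prop),
      pdq_cexp (by fun_prop), pdq_const_mul hL₁z, hG]
  have cu (k) : pdq k u z = 0 * pdq k qSum z + 0 * pdq k qProd z
      + -I * w / E * pdq k sepM z + 0 * pdq k sepN z := by
    rw [du]; ring
  have cpφ (k) : pdq k pφ z = 0 * pdq k qSum z + 0 * pdq k qProd z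
      + 0 * pdq k sepM z + -I * pdq k sepN z := by
    rw [dpφ]; ring
  have cφ (k) : pdq k φ z = 0 * pdq k qSum z + -I / qProd z * pdq k qProd z
      + -(w / E * ((3 * α - 1) / w + u z / (u z ^ 2 - 1))) * pdq k sepM z
      + 0 * pdq k sepN z := by
    rw [dφ, dL₂, dL₁, du]
    field_simp
    ring_nf
    simp only [I_sq]
    ring
  have cpu (k) : pdq k pu z = -I * E / w * pdq k qSum z + 0 * pdq k qProd z
      + (-pφ z * deriv A (u z) * I * w / E - qSum z * (2 * α - 1) / w) * pdq k sepM z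
      + ((3 * α - 1) / w + u z / (u z ^ 2 - 1)) * pdq k sepN z := by
    rw [dpu, dpφ, du, dL₁, hA]
    field_simp
    ring_nf
    simp only [I_sq]
    ring
  refine ⟨?_, ?_, ?_, ?_, ?_, ?_⟩
  · rw [canBrC4_eq_of_pdq_eq hd cu cpu]
    field_simp
    simp
  · rw [canBrC4_eq_of_pdq_eq hd cφ cpφ]
    field_simp
    simp
  · rw [canBrC4_eq_of_pdq_eq hd cu cφ]
    ring
  · rw [canBrC4_eq_of_pdq_eq hd cu cpφ]
    ring
  · rw [canBrC4_eq_of_pdq_eq hd cφ cpu]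
    field_simp
    ring
  · rw [canBrC4_eq_of_pdq_eq hd cpu cpφ]
    ring
end
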